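/- arXiv:1308.3072 — 2 statements merged into one kernel-verified Lean document; each statement's English description precedes it below -/
import Mathlib

section
/- For all x, y ∈ ℝ³ with x ≠ y and κ_s·|x−y| < 2, the operator norm of the difference between the Kupradze matrix and the Kelvin matrix satisfies ‖Γ^ω(x,y) − Γ⁰(x,y)‖ ≤ (ω/(4π))·[ (2/c_s³)·(1 − κ_s|x−y|/2)^{−1} + (1/c_p³)·(1 − κ_p|x−y|/2)^{−1} ]. -/
noncomputable section
open Real

abbrev E3 := EuclideanSpace ℝ (Fin 3)

/-- Free-space fundamental solution of the Helmholtz equation. -/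
def Phi (κ : ℝ) (x y : E3) : ℂ :=
  Complex.exp (Complex.I * κ * ‖x - y‖) / (4 * Real.pi * ‖x - y‖)

/-- Phase velocity `c_s = √μ`. -/
def cS (mu : ℝ) : ℝ := Real.sqrt mu

/-- Phase velocity `c_p = √(λ+2μ)`. -/
def cP (lam mu : ℝ) : ℝ := Real.sqrt (lam + 2 * mu)

/-- Transversal wavenumber `κ_s = ω/c_s`. -/
def kappaS (mu om : ℝ) : ℝ := om / cS mu

/-- Longitudinal wavenumber `κ_p = ω/c_p`. -/
def kappaP (lam mu om : ℝ) : ℝ := om / cP lam mu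

/-- The Kupradze matrix of the fundamental solution of the Navier equation. -/
def Gamma (lam mu om : ℝ) (x y : E3) (i j : Fin 3) : ℂ :=
  (1 / (mu : ℂ)) * Phi (kappaS mu om) x y * (if i = j then 1 else 0)
  + (1 / (om : ℂ) ^ 2) *
      fderiv ℝ
        (fun x' : E3 =>
          fderiv ℝ
            (fun x'' : E3 => Phi (kappaS mu om) x'' y - Phi (kappaP lam mu om) x'' y)
            x' (EuclideanSpace.single j 1))
        x (EuclideanSpace.single i 1)

/-- The `3×3` Kupradze matrix `Γ^ω(x,y)`. -/
def GammaMat (lam mu om : ℝ) (x y : E3) : Matrix (Fin 3) (Fin 3) ℂ :=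
  Matrix.of fun i j => Gamma lam mu om x y i j

/-- The Kelvin matrix (Kupradze matrix at zero frequency):
`Γ⁰(x,y)_{ij} = (1/(8π))[(1/c_s²+1/c_p²)δ_{ij}/|x−y| + (1/c_s²−1/c_p²)(x_i−y_i)(x_j−y_j)/|x−y|³]`. -/
def Gamma0Mat (lam mu : ℝ) (x y : E3) : Matrix (Fin 3) (Fin 3) ℂ :=
  Matrix.of fun i j =>
    (((1 / (8 * Real.pi)) *
        ((1 / cS mu ^ 2 + 1 / cP lam mu ^ 2) * (if i = j then 1 else 0) / ‖x - y‖
          + (1 / cS mu ^ 2 - 1 / cP lam mu ^ 2) * (x i - y i) * (x j - y j)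
              / ‖x - y‖ ^ 3) : ℝ) : ℂ)

/-- Operator norm of a `3×3` complex matrix with respect to Euclidean norms. -/
def opNorm3 (A : Matrix (Fin 3) (Fin 3) ℂ) : ℝ :=
  ‖LinearMap.toContinuousLinearMap (Matrix.toEuclideanLin A)‖

/- With `r = |x - y|` and `n = (x - y) / r`, both matrices act as scalars on the line `ℝ n` and on
its orthogonal complement. Computing the Hessian of the radial function `Φ_{κ_s} - Φ_{κ_p}` along
these eigenspaces gives `Γ^ω = (4 π r)⁻¹ (c_s⁻² S(i κ_s r) + c_p⁻² P(i κ_p r))`. With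
`ψ(z) = ∫₀¹ t exp (t z) dt`, the matrix `S(z)` has eigenvalues `exp z - ψ z` across `n` and `2 ψ z`
along `n`, while `P(z)` has eigenvalues `ψ z` and `exp z - 2 ψ z`; the Kelvin matrix is the same
expression with `S(0)` and `P(0)`. The norm of the difference is thus controlled by the power series
of the four eigenvalues, whose coefficients are at most `1 / n!` in modulus. -/

section Series

variable {𝕜 F : Type*} [RCLike 𝕜] [NormedAddCommGroup F] [NormedSpace 𝕜 F]

-- `2 ^ n ≤ (n + 1)!` compares the tail with a geometric series of ratio `‖z‖ / 2`.
lemma norm_sub_zeroth_le_of_hasSum_exp_series {a : ℕ → F} {s : F} {z : 𝕜} {C : ℝ}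
    (hs : HasSum (fun n : ℕ => (z ^ n / (n.factorial : 𝕜)) • a n) s)
    (ha : ∀ n, ‖a (n + 1)‖ ≤ C) (hz : ‖z‖ < 2) :
    ‖s - a 0‖ ≤ C * (‖z‖ * (1 - ‖z‖ / 2)⁻¹) := by
  have tail : HasSum (fun n : ℕ => (z ^ (n + 1) / ((n + 1).factorial : 𝕜)) • a (n + 1))
      (s - a 0) := by
    simpa using (hasSum_nat_add_iff' 1).2 hs
  have geometric : HasSum (fun n : ℕ => C * (‖z‖ * (‖z‖ / 2) ^ n))
      (C * (‖z‖ * (1 - ‖z‖ / 2)⁻¹)) :=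
    ((hasSum_geometric_of_lt_one (by positivity) (by linarith)).mul_left _).mul_left _
  refine tail.norm_le_of_bounded geometric fun n => ?_
  have two_pow_le : (2 : ℝ) ^ n ≤ ((n + 1).factorial : ℝ) := by
    have h := Nat.factorial_mul_pow_le_factorial (m := 1) (n := n)
    rw [Nat.factorial_one, one_mul, add_comm 1 n] at h
    exact_mod_cast h
  have monomial_le : ‖z ^ (n + 1) / ((n + 1).factorial : 𝕜)‖ ≤ ‖z‖ * (‖z‖ / 2) ^ n := by
    rw [norm_div, norm_pow, RCLike.norm_natCast, div_pow, pow_succ', mul_div_assoc]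
    gcongr
  rw [norm_smul, mul_comm]
  exact mul_le_mul (ha n) monomial_le (norm_nonneg _) ((norm_nonneg _).trans (ha n))

end Series

lemma hasSum_cexp (z : ℂ) :
    HasSum (fun n : ℕ => z ^ n / (n.factorial : ℂ)) (Complex.exp z) := by
  rw [Complex.exp_eq_exp_ℂ]
  exact NormedSpace.expSeries_div_hasSum_exp z

/-- The exponential moment `∫₀¹ t exp (t z) dt`, written in closed form; the value at `z = 0` is the
junk value `0` instead of `1 / 2`. -/
def expMoment (z : ℂ) : ℂ := (Complex.exp z * (z - 1) + 1) / z ^ 2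

lemma exp_mul_sub_one_eq_expMoment {z : ℂ} (hz : z ≠ 0) :
    Complex.exp z * (z - 1) = z ^ 2 * expMoment z - 1 := by
  rw [expMoment]
  field_simp
  ring

lemma hasSum_expMoment {z : ℂ} (hz : z ≠ 0) :
    HasSum (fun n : ℕ => z ^ n / (n.factorial : ℂ) * (1 / (n + 2))) (expMoment z) := by
  have shift_one := (hasSum_nat_add_iff' 1).2 ((hasSum_cexp z).mul_left z)
  have shift_two := (hasSum_nat_add_iff' 2).2 (hasSum_cexp z)
  convert! (shift_one.sub shift_two).div_const (z ^ 2) using 1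
  · funext n
    have hn1 : (n : ℂ) + 1 ≠ 0 := by exact_mod_cast n.succ_ne_zero
    have hn2 : (n : ℂ) + 1 + 1 ≠ 0 := by exact_mod_cast (n + 1).succ_ne_zero
    have hfact : (n.factorial : ℂ) ≠ 0 := by exact_mod_cast n.factorial_ne_zero
    rw [show (n : ℂ) + 2 = n + 1 + 1 by ring]
    simp only [Nat.factorial_succ, Nat.cast_mul, Nat.cast_add, Nat.cast_one]
    field_simp
    ring
  · simp only [expMoment, Finset.sum_range_succ, Finset.sum_range_zero, pow_zero, pow_one,
      Nat.factorial_zero, Nat.factorial_one, Nat.cast_one]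
    ring

/- The `n`-th Taylor coefficient `a + b / (n + 2)` is, for `n ≥ 1`, a convex combination of `a` and
`a + b / 3`. -/
lemma norm_exp_add_expMoment_sub_le {a b z : ℂ} (ha : ‖a‖ ≤ 1) (hab : ‖a + b / 3‖ ≤ 1)
    (hz : z ≠ 0) (hz2 : ‖z‖ < 2) :
    ‖a * Complex.exp z + b * expMoment z - (a + b / 2)‖ ≤ ‖z‖ * (1 - ‖z‖ / 2)⁻¹ := by
  have hsum : HasSum (fun n : ℕ => (z ^ n / (n.factorial : ℂ)) • (a + b / (n + 2)))
      (a * Complex.exp z + b * expMoment z) := by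
    convert! ((hasSum_cexp z).mul_left a).add ((hasSum_expMoment hz).mul_left b) using 2 with n
    rw [smul_eq_mul]
    ring
  have hcoeff (n : ℕ) : ‖a + b / ((n + 1 : ℕ) + 2)‖ ≤ 1 := by
    have hn : (n : ℂ) + 3 ≠ 0 := by exact_mod_cast (n + 2).succ_ne_zero
    have combination : a + b / ((n + 1 : ℕ) + 2)
        = ((n / (n + 3) : ℝ) • a + (3 / (n + 3) : ℝ) • (a + b / 3)) := by
      rw [Complex.real_smul, Complex.real_smul]
      push_cast
      rw [show (n : ℂ) + 1 + 2 = n + 3 by ring]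
      field_simp
      ring
    rw [combination, ← mem_closedBall_zero_iff]
    exact convex_closedBall (0 : ℂ) 1 (mem_closedBall_zero_iff.2 ha)
      (mem_closedBall_zero_iff.2 hab) (by positivity) (by positivity) (by field_simp)
  simpa using norm_sub_zeroth_le_of_hasSum_exp_series hsum hcoeff hz2

section AxialMatrix

variable {𝕜 : Type*} [RCLike 𝕜]

lemma norm_smul_starProjection_orthogonal_add_smul_starProjection_le {H : Type*}
    [NormedAddCommGroup H] [InnerProductSpace 𝕜 H] (K : Submodule 𝕜 H) [K.HasOrthogonalProjection]
    (α γ : 𝕜) : ‖α • Kᗮ.starProjection + γ • K.starProjection‖ ≤ max ‖α‖ ‖γ‖ := by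
  have hmax : 0 ≤ max ‖α‖ ‖γ‖ := (norm_nonneg α).trans (le_max_left _ _)
  refine ContinuousLinearMap.opNorm_le_bound _ hmax fun v => ?_
  rw [← sq_le_sq₀ (norm_nonneg _) (by positivity)]
  have orthogonal : inner 𝕜 (α • Kᗮ.starProjection v) (γ • K.starProjection v) = 0 :=
    K.inner_left_of_mem_orthogonal (K.smul_mem _ (K.starProjection_apply_mem v))
      (Kᗮ.smul_mem _ (Kᗮ.starProjection_apply_mem v))
  calc ‖(α • Kᗮ.starProjection + γ • K.starProjection) v‖ ^ 2
      = ‖α‖ ^ 2 * ‖Kᗮ.starProjection v‖ ^ 2 + ‖γ‖ ^ 2 * ‖K.starProjection v‖ ^ 2 := by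
        rw [← mul_pow, ← mul_pow, ← norm_smul, ← norm_smul]
        simpa only [sq] using! norm_add_sq_eq_norm_sq_add_norm_sq_of_inner_eq_zero _ _ orthogonal
    _ ≤ max ‖α‖ ‖γ‖ ^ 2 * ‖Kᗮ.starProjection v‖ ^ 2
          + max ‖α‖ ‖γ‖ ^ 2 * ‖K.starProjection v‖ ^ 2 := by
        gcongr
        · exact le_max_left _ _
        · exact le_max_right _ _
    _ = (max ‖α‖ ‖γ‖ * ‖v‖) ^ 2 := by
        rw [mul_pow, K.norm_sq_eq_add_norm_sq_starProjection v]
        ring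

variable {ι : Type*} [DecidableEq ι]

/-- The matrix which, for a unit vector `u`, acts as the scalar `α` on the orthogonal complement of
`u` (transversally) and as the scalar `γ` on the line through `u` (longitudinally). -/
def axialMatrix (u : EuclideanSpace 𝕜 ι) (α γ : 𝕜) : Matrix ι ι 𝕜 :=
  α • (1 - Matrix.vecMulVec u (star u)) + γ • Matrix.vecMulVec u (star u)

lemma axialMatrix_apply (u : EuclideanSpace 𝕜 ι) (α γ : 𝕜) (i j : ι) :
    axialMatrix u α γ i j
      = α * ((if i = j then 1 else 0) - u i * star (u j)) + γ * (u i * star (u j)) := by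
  simp [axialMatrix, Matrix.vecMulVec_apply, Matrix.one_apply]

lemma axialMatrix_sub (u : EuclideanSpace 𝕜 ι) (α α' γ γ' : 𝕜) :
    axialMatrix u α γ - axialMatrix u α' γ' = axialMatrix u (α - α') (γ - γ') := by
  unfold axialMatrix
  module

variable [Fintype ι]

lemma toEuclideanCLM_vecMulVec_self {u : EuclideanSpace 𝕜 ι} (hu : ‖u‖ = 1) :
    Matrix.toEuclideanCLM (𝕜 := 𝕜) (Matrix.vecMulVec u (star u)) = (𝕜 ∙ u).starProjection := by
  ext v i
  rw [Submodule.starProjection_unit_singleton 𝕜 hu]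
  simp [Matrix.vecMulVec_mulVec, PiLp.inner_apply, dotProduct, mul_comm]

open scoped Matrix.Norms.L2Operator in
lemma norm_axialMatrix_le {u : EuclideanSpace 𝕜 ι} (hu : ‖u‖ = 1) (α γ : 𝕜) :
    ‖axialMatrix u α γ‖ ≤ max ‖α‖ ‖γ‖ := by
  have spectral : Matrix.toEuclideanCLM (𝕜 := 𝕜) (axialMatrix u α γ)
      = α • (𝕜 ∙ u)ᗮ.starProjection + γ • (𝕜 ∙ u).starProjection := by
    rw [Submodule.starProjection_orthogonal', ← toEuclideanCLM_vecMulVec_self hu, axialMatrix,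
      map_add, map_smul, map_smul, map_sub, map_one]
  rw [Matrix.cstar_norm_def, spectral]
  exact norm_smul_starProjection_orthogonal_add_smul_starProjection_le _ α γ

end AxialMatrix

section Radial

variable {E F : Type*} [NormedAddCommGroup E] [InnerProductSpace ℝ E]
  [NormedAddCommGroup F] [NormedSpace ℝ F] {x y : E}

open scoped RealInnerProductSpace

lemma hasFDerivAt_norm_sub (hxy : x ≠ y) :
    HasFDerivAt (fun x' : E => ‖x' - y‖) (innerSL ℝ (‖x - y‖⁻¹ • (x - y))) x := by
  have hr : ‖x - y‖ ≠ 0 := norm_ne_zero_iff.2 (sub_ne_zero.2 hxy)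
  have hsqrt := ((hasFDerivAt_id x).sub_const y).norm_sq.sqrt (pow_ne_zero 2 hr)
  simp only [id, Real.sqrt_sq (norm_nonneg _)] at hsqrt
  refine hsqrt.congr_fderiv (ContinuousLinearMap.ext fun v => ?_)
  simp only [one_div, mul_inv_rev, map_sub, ContinuousLinearMap.comp_id, smul_apply, sub_apply,
    coe_innerSL_apply, nsmul_eq_mul, Nat.cast_ofNat, smul_eq_mul, map_smul]
  field_simp

lemma hasFDerivAt_radial {f : ℝ → F} {f' : F} (hxy : x ≠ y) (hf : HasDerivAt f f' ‖x - y‖) :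
    HasFDerivAt (fun x' : E => f ‖x' - y‖)
      ((innerSL ℝ (‖x - y‖⁻¹ • (x - y))).smulRight f') x :=
  (hf.hasFDerivAt.comp x (hasFDerivAt_norm_sub hxy)).congr_fderiv
    (ContinuousLinearMap.ext fun _ => rfl)

/- With `n = (x - y) / ‖x - y‖`, the Hessian of a radial function is `f' / r` across `n` and `f''`
along `n`. -/
lemma fderiv_fderiv_radial {f f' : ℝ → F} {f'' : F} (hxy : x ≠ y)
    (hf : ∀ r, 0 < r → HasDerivAt f (f' r) r) (hf' : HasDerivAt f' f'' ‖x - y‖) (v w : E) :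
    fderiv ℝ (fun x' => fderiv ℝ (fun x'' => f ‖x'' - y‖) x' w) x v
      = (⟪v, w⟫ - ⟪‖x - y‖⁻¹ • (x - y), v⟫ * ⟪‖x - y‖⁻¹ • (x - y), w⟫) •
          (‖x - y‖⁻¹ • f' ‖x - y‖)
        + (⟪‖x - y‖⁻¹ • (x - y), v⟫ * ⟪‖x - y‖⁻¹ • (x - y), w⟫) • f'' := by
  have hr : ‖x - y‖ ≠ 0 := norm_ne_zero_iff.2 (sub_ne_zero.2 hxy)
  have gradient : (fun x' => fderiv ℝ (fun x'' => f ‖x'' - y‖) x' w)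
      =ᶠ[nhds x] fun x' => ⟪x' - y, w⟫ • (‖x' - y‖⁻¹ • f' ‖x' - y‖) := by
    filter_upwards [isOpen_ne.mem_nhds hxy] with x' hx'
    rw [(hasFDerivAt_radial hx' (hf _ (norm_pos_iff.2 (sub_ne_zero.2 hx')))).fderiv]
    rw [ContinuousLinearMap.smulRight_apply, innerSL_apply_apply, real_inner_smul_left, mul_comm,
      mul_smul]
  have hprofile := hasFDerivAt_radial hxy ((hasDerivAt_inv hr).smul hf')
  have hlinear := ((hasFDerivAt_id x).sub_const y).inner ℝ (hasFDerivAt_const w x)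
  have hessian : HasFDerivAt (fun x' => ⟪x' - y, w⟫ • (‖x' - y‖⁻¹ • f' ‖x' - y‖)) _ x :=
    hlinear.smul hprofile
  rw [gradient.fderiv_eq, hessian.fderiv]
  simp only [add_apply, smul_apply, ContinuousLinearMap.smulRight_apply, innerSL_apply_apply,
    ContinuousLinearMap.comp_apply, ContinuousLinearMap.prod_apply, fderivInnerCLM_apply,
    ContinuousLinearMap.id_apply, zero_apply, inner_zero_right, real_inner_smul_left, id,
    zero_add]
  match_scalars
  · field_simp
  · field_simp
    ring

end Radial

/-- The radial profile of the fundamental solution `Phi κ`. -/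
def sphericalWave (κ r : ℝ) : ℂ := Complex.exp (Complex.I * κ * r) / (4 * Real.pi * r)

/-- The first derivative of `sphericalWave κ`. -/
def sphericalWaveDeriv (κ r : ℝ) : ℂ :=
  Complex.exp (Complex.I * κ * r) * (Complex.I * κ * r - 1) / (4 * Real.pi * r ^ 2)

/-- The second derivative of `sphericalWave κ`. -/
def sphericalWaveDeriv₂ (κ r : ℝ) : ℂ :=
  Complex.exp (Complex.I * κ * r) * ((Complex.I * κ * r) ^ 2 - 2 * (Complex.I * κ * r) + 2)
    / (4 * Real.pi * r ^ 3)

lemma hasDerivAt_sphericalWave (κ : ℝ) {r : ℝ} (hr : r ≠ 0) :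
    HasDerivAt (sphericalWave κ) (sphericalWaveDeriv κ r) r := by
  have hrC : (r : ℂ) ≠ 0 := by exact_mod_cast hr
  have hofReal : HasDerivAt (fun r : ℝ => (r : ℂ)) 1 r := Complex.ofRealCLM.hasDerivAt
  have hphase := hofReal.const_mul (Complex.I * κ)
  refine (hphase.cexp.div (hofReal.const_mul (4 * (Real.pi : ℂ)))
    (by simp [hr, Real.pi_ne_zero])).congr_deriv ?_
  rw [sphericalWaveDeriv]
  field_simp

lemma hasDerivAt_sphericalWaveDeriv (κ : ℝ) {r : ℝ} (hr : r ≠ 0) :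
    HasDerivAt (sphericalWaveDeriv κ) (sphericalWaveDeriv₂ κ r) r := by
  have hrC : (r : ℂ) ≠ 0 := by exact_mod_cast hr
  have hofReal : HasDerivAt (fun r : ℝ => (r : ℂ)) 1 r := Complex.ofRealCLM.hasDerivAt
  have hphase := hofReal.const_mul (Complex.I * κ)
  refine ((hphase.cexp.mul (hphase.sub_const 1)).div
    ((hofReal.pow 2).const_mul (4 * (Real.pi : ℂ)))
    (by simp [hr, Real.pi_ne_zero])).congr_deriv ?_
  rw [sphericalWaveDeriv₂]
  simp only [Pi.pow_apply, Pi.mul_apply]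
  field_simp
  ring

/-- The unit vector from `y` to `x`, regarded as a complex vector. -/
def direction (x y : E3) : EuclideanSpace ℂ (Fin 3) :=
  WithLp.toLp 2 fun i => (((‖x - y‖⁻¹ • (x - y)) i : ℝ) : ℂ)

lemma norm_direction {x y : E3} (hxy : x ≠ y) : ‖direction x y‖ = 1 := by
  have hr : ‖x - y‖ ≠ 0 := norm_ne_zero_iff.2 (sub_ne_zero.2 hxy)
  calc ‖direction x y‖ = ‖‖x - y‖⁻¹ • (x - y)‖ := by
        simp only [direction, EuclideanSpace.norm_eq, Complex.norm_real]
    _ = 1 := by rw [norm_smul, norm_inv, norm_norm, inv_mul_cancel₀ hr]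

lemma fderiv_fderiv_Phi_sub (κ κ' : ℝ) {x y : E3} (hxy : x ≠ y) (i j : Fin 3) :
    fderiv ℝ (fun x' : E3 => fderiv ℝ (fun x'' : E3 => Phi κ x'' y - Phi κ' x'' y)
        x' (EuclideanSpace.single j 1)) x (EuclideanSpace.single i 1)
      = axialMatrix (direction x y)
          ((sphericalWaveDeriv κ ‖x - y‖ - sphericalWaveDeriv κ' ‖x - y‖) / ‖x - y‖)
          (sphericalWaveDeriv₂ κ ‖x - y‖ - sphericalWaveDeriv₂ κ' ‖x - y‖) i j := by
  have hr : ‖x - y‖ ≠ 0 := norm_ne_zero_iff.2 (sub_ne_zero.2 hxy)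
  have hessian := fderiv_fderiv_radial hxy
    (f := fun r => sphericalWave κ r - sphericalWave κ' r)
    (f' := fun r => sphericalWaveDeriv κ r - sphericalWaveDeriv κ' r)
    (fun r hr => (hasDerivAt_sphericalWave κ hr.ne').sub (hasDerivAt_sphericalWave κ' hr.ne'))
    ((hasDerivAt_sphericalWaveDeriv κ hr).sub (hasDerivAt_sphericalWaveDeriv κ' hr))
    (EuclideanSpace.single i 1) (EuclideanSpace.single j 1)
  refine hessian.trans ?_
  rw [axialMatrix_apply]
  simp only [direction, EuclideanSpace.inner_single_right, Complex.real_smul, RCLike.star_def,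
    Complex.conj_ofReal, conj_trivial, one_mul, PiLp.single_apply, eq_comm (a := j),
    apply_ite Complex.ofReal, Complex.ofReal_sub, Complex.ofReal_mul, Complex.ofReal_inv,
    Complex.ofReal_one, Complex.ofReal_zero]
  ring

section ElasticModes

variable {ι : Type*} [DecidableEq ι]

/-- The matrix of the pressure part of `Γ^ω`, up to the factor `1 / (4 π r c_p²)`, where
`z = i κ_p r` and `u` is the direction of propagation. -/
def pressureMatrix (u : EuclideanSpace ℂ ι) (z : ℂ) : Matrix ι ι ℂ :=
  axialMatrix u (expMoment z) (Complex.exp z - 2 * expMoment z)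

/-- The matrix of the shear part of `Γ^ω`, up to the factor `1 / (4 π r c_s²)`, where
`z = i κ_s r` and `u` is the direction of propagation. -/
def shearMatrix (u : EuclideanSpace ℂ ι) (z : ℂ) : Matrix ι ι ℂ :=
  axialMatrix u (Complex.exp z - expMoment z) (2 * expMoment z)

open scoped Matrix.Norms.L2Operator

variable [Fintype ι] {u : EuclideanSpace ℂ ι} {z : ℂ}

lemma norm_shearMatrix_sub_le (hu : ‖u‖ = 1) (hz : z ≠ 0) (hz2 : ‖z‖ < 2) :
    ‖shearMatrix u z - axialMatrix u (1 / 2) 1‖ ≤ ‖z‖ * (1 - ‖z‖ / 2)⁻¹ := by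
  have transversal := norm_exp_add_expMoment_sub_le (a := 1) (b := -1) (by norm_num)
    (by norm_num) hz hz2
  have longitudinal := norm_exp_add_expMoment_sub_le (a := 0) (b := 2) (by norm_num)
    (by norm_num) hz hz2
  rw [shearMatrix, axialMatrix_sub]
  refine (norm_axialMatrix_le hu _ _).trans (max_le ?_ ?_)
  · exact (congrArg norm (by ring)).trans_le transversal
  · exact (congrArg norm (by ring)).trans_le longitudinal

lemma norm_pressureMatrix_sub_le (hu : ‖u‖ = 1) (hz : z ≠ 0) (hz2 : ‖z‖ < 2) :
    ‖pressureMatrix u z - axialMatrix u (1 / 2) 0‖ ≤ ‖z‖ * (1 - ‖z‖ / 2)⁻¹ := by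
  have transversal := norm_exp_add_expMoment_sub_le (a := 0) (b := 1) (by norm_num)
    (by norm_num) hz hz2
  have longitudinal := norm_exp_add_expMoment_sub_le (a := 1) (b := -2) (by norm_num)
    (by norm_num) hz hz2
  rw [pressureMatrix, axialMatrix_sub]
  refine (norm_axialMatrix_le hu _ _).trans (max_le ?_ ?_)
  · exact (congrArg norm (by ring)).trans_le transversal
  · exact (congrArg norm (by ring)).trans_le longitudinal

end ElasticModes

section WaveNumber

variable {c ω r : ℝ}

lemma sphericalWaveDeriv_div_eq (hc : c ≠ 0) (hω : ω ≠ 0) (hr : r ≠ 0) :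
    sphericalWaveDeriv (ω / c) r / r / ω ^ 2
      = -(expMoment (Complex.I * (ω / c : ℝ) * r) / c ^ 2 + 1 / (ω * r) ^ 2)
          / (4 * Real.pi * r) := by
  have hz : Complex.I * (ω / c : ℝ) * r ≠ 0 := by simp [hc, hω, hr]
  have hcC : (c : ℂ) ≠ 0 := by exact_mod_cast hc
  have hωC : (ω : ℂ) ≠ 0 := by exact_mod_cast hω
  have hrC : (r : ℂ) ≠ 0 := by exact_mod_cast hr
  rw [sphericalWaveDeriv, exp_mul_sub_one_eq_expMoment hz]
  generalize expMoment (Complex.I * (ω / c : ℝ) * r) = ψ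
  push_cast
  rw [mul_pow, mul_pow, Complex.I_sq]
  field_simp
  ring

lemma sphericalWaveDeriv₂_div_eq (hc : c ≠ 0) (hω : ω ≠ 0) (hr : r ≠ 0) :
    sphericalWaveDeriv₂ (ω / c) r / ω ^ 2
      = -((Complex.exp (Complex.I * (ω / c : ℝ) * r)
            - 2 * expMoment (Complex.I * (ω / c : ℝ) * r)) / c ^ 2 - 2 / (ω * r) ^ 2)
          / (4 * Real.pi * r) := by
  have hz : Complex.I * (ω / c : ℝ) * r ≠ 0 := by simp [hc, hω, hr]
  have hcC : (c : ℂ) ≠ 0 := by exact_mod_cast hc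
  have hωC : (ω : ℂ) ≠ 0 := by exact_mod_cast hω
  have hrC : (r : ℂ) ≠ 0 := by exact_mod_cast hr
  have numerator (z : ℂ) (hz : z ≠ 0) : Complex.exp z * (z ^ 2 - 2 * z + 2)
      = z ^ 2 * (Complex.exp z - 2 * expMoment z) + 2 := by
    linear_combination -2 * exp_mul_sub_one_eq_expMoment hz
  rw [sphericalWaveDeriv₂, numerator _ hz]
  generalize Complex.exp (Complex.I * (ω / c : ℝ) * r) = e
  generalize expMoment (Complex.I * (ω / c : ℝ) * r) = ψ
  push_cast
  rw [mul_pow, mul_pow, Complex.I_sq]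
  field_simp
  ring

end WaveNumber

section Elastic

variable {lam mu om : ℝ} {x y : E3}

lemma GammaMat_eq (hmu : 0 < mu) (hlm : 0 < lam + 2 * mu) (hom : om ≠ 0) (hxy : x ≠ y) :
    GammaMat lam mu om x y
      = (1 / (4 * Real.pi * ‖x - y‖) : ℂ) •
          ((1 / cS mu ^ 2 : ℂ) •
              shearMatrix (direction x y) (Complex.I * kappaS mu om * ‖x - y‖)
            + (1 / cP lam mu ^ 2 : ℂ) •
              pressureMatrix (direction x y) (Complex.I * kappaP lam mu om * ‖x - y‖)) := by
  have hr : ‖x - y‖ ≠ 0 := norm_ne_zero_iff.2 (sub_ne_zero.2 hxy)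
  have hS : cS mu ≠ 0 := (Real.sqrt_pos.2 hmu).ne'
  have hP : cP lam mu ≠ 0 := (Real.sqrt_pos.2 hlm).ne'
  have hmu_eq : (mu : ℂ) = (cS mu : ℂ) ^ 2 := by exact_mod_cast (Real.sq_sqrt hmu.le).symm
  have shear₁ := sphericalWaveDeriv_div_eq hS hom hr
  have shear₂ := sphericalWaveDeriv₂_div_eq hS hom hr
  have pressure₁ := sphericalWaveDeriv_div_eq hP hom hr
  have pressure₂ := sphericalWaveDeriv₂_div_eq hP hom hr
  ext i j
  simp only [GammaMat, Matrix.of_apply, _root_.Gamma, fderiv_fderiv_Phi_sub _ _ hxy, hmu_eq,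
    shearMatrix, pressureMatrix, Matrix.smul_apply, Matrix.add_apply, axialMatrix_apply,
    smul_eq_mul]
  rw [Phi, kappaS, kappaP]
  generalize direction x y i * star (direction x y j) = nn
  linear_combination ((if i = j then 1 else 0) - nn) * (shear₁ - pressure₁)
    + nn * (shear₂ - pressure₂)

lemma Gamma0Mat_eq :
    Gamma0Mat lam mu x y
      = (1 / (4 * Real.pi * ‖x - y‖) : ℂ) •
          ((1 / cS mu ^ 2 : ℂ) • axialMatrix (direction x y) (1 / 2) 1
            + (1 / cP lam mu ^ 2 : ℂ) • axialMatrix (direction x y) (1 / 2) 0) := by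
  ext i j
  simp only [Gamma0Mat, Matrix.of_apply, Matrix.smul_apply, Matrix.add_apply, axialMatrix_apply,
    smul_eq_mul, direction, PiLp.smul_apply, PiLp.sub_apply, RCLike.star_def, Complex.conj_ofReal]
  split_ifs <;> push_cast <;> ring

open scoped Matrix.Norms.L2Operator in
lemma opNorm3_eq_norm (A : Matrix (Fin 3) (Fin 3) ℂ) : opNorm3 A = ‖A‖ := rfl

open scoped Matrix.Norms.L2Operator in
lemma opNorm3_GammaMat_sub_Gamma0Mat_le (hmu : 0 < mu) (hlm : 0 < lam + 2 * mu) (hom : om ≠ 0)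
    (hxy : x ≠ y) :
    opNorm3 (GammaMat lam mu om x y - Gamma0Mat lam mu x y)
      ≤ 1 / (4 * Real.pi * ‖x - y‖) *
          (1 / cS mu ^ 2 * ‖shearMatrix (direction x y) (Complex.I * kappaS mu om * ‖x - y‖)
              - axialMatrix (direction x y) (1 / 2) 1‖
            + 1 / cP lam mu ^ 2 *
              ‖pressureMatrix (direction x y) (Complex.I * kappaP lam mu om * ‖x - y‖)
                - axialMatrix (direction x y) (1 / 2) 0‖) := by
  rw [opNorm3_eq_norm, GammaMat_eq hmu hlm hom hxy, Gamma0Mat_eq, ← smul_sub, add_sub_add_comm,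
    ← smul_sub, ← smul_sub, norm_smul]
  refine (mul_le_mul_of_nonneg_left (norm_add_le _ _) (norm_nonneg _)).trans_eq ?_
  simp [norm_smul, abs_of_pos Real.pi_pos]

lemma kappaP_le_kappaS (hmu : 0 < mu) (hlm : 0 ≤ lam + mu) (hom : 0 ≤ om) :
    kappaP lam mu om ≤ kappaS mu om :=
  div_le_div_of_nonneg_left hom (Real.sqrt_pos.2 hmu) (Real.sqrt_le_sqrt (by linarith))

end Elastic

lemma norm_I_mul_ofReal_mul_ofReal {κ r : ℝ} (hκ : 0 ≤ κ) (hr : 0 ≤ r) :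
    ‖Complex.I * κ * r‖ = κ * r := by
  rw [norm_mul, norm_mul, Complex.norm_I, one_mul, Complex.norm_of_nonneg hκ,
    Complex.norm_of_nonneg hr]

theorem gamma_sub_kelvin_bound_general (lam mu om : ℝ) (hmu : 0 < mu) (hlm : 0 < lam + 2 * mu)
    (hom : 0 < om) (x y : E3) (hxy : x ≠ y) (hshear : kappaS mu om * ‖x - y‖ < 2)
    (hpressure : kappaP lam mu om * ‖x - y‖ < 2) :
    opNorm3 (GammaMat lam mu om x y - Gamma0Mat lam mu x y)
      ≤ (om / (4 * Real.pi)) *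
        ((1 / cS mu ^ 3) * (1 - kappaS mu om * ‖x - y‖ / 2)⁻¹
          + (1 / cP lam mu ^ 3) * (1 - kappaP lam mu om * ‖x - y‖ / 2)⁻¹) := by
  have hr : 0 < ‖x - y‖ := norm_pos_iff.2 (sub_ne_zero.2 hxy)
  have hcS : 0 < cS mu := Real.sqrt_pos.2 hmu
  have hcP : 0 < cP lam mu := Real.sqrt_pos.2 hlm
  have hkS : 0 < kappaS mu om := div_pos hom hcS
  have hkP : 0 < kappaP lam mu om := div_pos hom hcP
  have hzS := norm_I_mul_ofReal_mul_ofReal hkS.le hr.le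
  have hzP := norm_I_mul_ofReal_mul_ofReal hkP.le hr.le
  have shear := norm_shearMatrix_sub_le (norm_direction hxy)
    (norm_pos_iff.1 (hzS ▸ mul_pos hkS hr)) (hzS.trans_lt hshear)
  have pressure := norm_pressureMatrix_sub_le (norm_direction hxy)
    (norm_pos_iff.1 (hzP ▸ mul_pos hkP hr)) (hzP.trans_lt hpressure)
  rw [hzS] at shear
  rw [hzP] at pressure
  calc opNorm3 (GammaMat lam mu om x y - Gamma0Mat lam mu x y)
      ≤ 1 / (4 * Real.pi * ‖x - y‖) *
          (1 / cS mu ^ 2 * (kappaS mu om * ‖x - y‖ * (1 - kappaS mu om * ‖x - y‖ / 2)⁻¹)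
            + 1 / cP lam mu ^ 2 *
              (kappaP lam mu om * ‖x - y‖ * (1 - kappaP lam mu om * ‖x - y‖ / 2)⁻¹)) := by
        refine (opNorm3_GammaMat_sub_Gamma0Mat_le hmu hlm hom.ne' hxy).trans ?_
        gcongr
    _ = _ := by
        generalize (1 - kappaS mu om * ‖x - y‖ / 2)⁻¹ = shearFactor
        generalize (1 - kappaP lam mu om * ‖x - y‖ / 2)⁻¹ = pressureFactor
        rw [kappaS, kappaP]
        field_simp

/-- Estimate for `Γ^ω − Γ⁰`: for `x ≠ y` with `κ_s|x−y| < 2`,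
`‖Γ^ω(x,y) − Γ⁰(x,y)‖ ≤ (ω/(4π))[(2/c_s³)(1−κ_s|x−y|/2)⁻¹ + (1/c_p³)(1−κ_p|x−y|/2)⁻¹]`. -/
theorem gamma_sub_kelvin_bound (lam mu om : ℝ) (hmu : 0 < mu)
    (hlm : 0 < 3 * lam + 2 * mu) (hom : 0 < om)
    (x y : E3) (hxy : x ≠ y) (hsmall : kappaS mu om * ‖x - y‖ < 2) :
    opNorm3 (GammaMat lam mu om x y - Gamma0Mat lam mu x y)
      ≤ (om / (4 * Real.pi)) *
        ((2 / cS mu ^ 3) * (1 - kappaS mu om * ‖x - y‖ / 2)⁻¹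
          + (1 / cP lam mu ^ 3) * (1 - kappaP lam mu om * ‖x - y‖ / 2)⁻¹) := by
  have hpressure : kappaP lam mu om * ‖x - y‖ < 2 := hsmall.trans_le' <| by
    gcongr
    exact kappaP_le_kappaS hmu (by linarith) hom.le
  have shear_nonneg : 0 ≤ (1 - kappaS mu om * ‖x - y‖ / 2)⁻¹ := inv_nonneg.2 (by linarith)
  have cS_nonneg : 0 ≤ cS mu := Real.sqrt_nonneg mu
  refine (gamma_sub_kelvin_bound_general lam mu om hmu (by linarith) hom x y hxy hsmall
    hpressure).trans ?_
  gcongr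
  norm_num

end
end

section
/- Let D > 0, set N := ⌊2D·max{κ_s, κ_p}·e²⌋ and t := 1/c_p² − 2D(ω/c_s³)·( Σ_{l=0}^{N−1} (κ_s D/2)^l + 2^{1−N} ) − D(ω/c_p³)·( Σ_{l=0}^{N−1} (κ_p D/2)^l + 2^{1−N} ). Then for all z, z′ ∈ ℝ³ with 0 < |z − z′| ≤ D and every v ∈ ℝ³, the real part of the Kupradze matrix satisfies vᵀ·Re(Γ^ω(z, z′))·v ≥ (t/(4π|z − z′|))·|v|². -/
noncomputable section
open Real

/-- `N := ⌊2D·max{κ_s,κ_p}·e²⌋`. -/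
def NOm (lam mu om D : ℝ) : ℕ :=
  Nat.floor (2 * D * max (kappaS mu om) (kappaP lam mu om) * Real.exp 1 ^ 2)

/-- The constant `t` of Theorem 1.1:
`t = 1/c_p² − 2D(ω/c_s³)(Σ_{l<N}(κ_s D/2)^l + 2^{1−N}) − D(ω/c_p³)(Σ_{l<N}(κ_p D/2)^l + 2^{1−N})`. -/
def tConst (lam mu om D : ℝ) : ℝ :=
  1 / cP lam mu ^ 2
    - 2 * D * (om / cS mu ^ 3) *
        ((∑ l ∈ Finset.range (NOm lam mu om D), (kappaS mu om * D / 2) ^ l)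
          + (2 : ℝ) ^ ((1 : ℤ) - (NOm lam mu om D : ℤ)))
    - D * (om / cP lam mu ^ 3) *
        ((∑ l ∈ Finset.range (NOm lam mu om D), (kappaP lam mu om * D / 2) ^ l)
          + (2 : ℝ) ^ ((1 : ℤ) - (NOm lam mu om D : ℤ)))

/-! By spherical symmetry `Re Γ^ω(x, y)` has only two eigenvalues, one on the line spanned by
`x - y` and one on its orthogonal complement. Writing `Φ_κ = g_κ(r)` and using the Helmholtz
equation to eliminate the second derivative of `g_κ`, both become combinations of `s² cos s` and
`τ(s) = s sin s + cos s` at `s = κ_s r` and `s = κ_p r`. The three combinations that occur have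
simple derivatives; integrating `cos s ≥ 1 - s` and `sin s ≤ 1` from `0` bounds both eigenvalues
below by `(1/c_p² - (r/3)(2ω/c_s³ + ω/c_p³)) / (4πr)`. This is at least `t / (4πr)` because each
sum `Σ_{l<N} q^l + 2^{1-N}` in `t` is at least `1`, whatever `N` is. -/

section TrigonometricBounds

lemma one_sub_le_cos {x : ℝ} (hx : 0 ≤ x) : 1 - x ≤ cos x := by
  rcases le_total x 2 with h2 | h2
  · nlinarith [one_sub_sq_div_two_le_cos (x := x)]
  · linarith [neg_one_le_cos x]

lemma le_of_hasDerivAt_le {f g f' g' : ℝ → ℝ} {a x : ℝ} (hf : ∀ y, HasDerivAt f (f' y) y)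
    (hg : ∀ y, HasDerivAt g (g' y) y) (ha : f a ≤ g a) (hle : ∀ y, a ≤ y → f' y ≤ g' y)
    (hx : a ≤ x) : f x ≤ g x :=
  image_le_of_deriv_right_le_deriv_boundary
    (fun y _ => (hf y).continuousAt.continuousWithinAt) (fun y _ => (hf y).hasDerivWithinAt) ha
    (fun y _ => (hg y).continuousAt.continuousWithinAt) (fun y _ => (hg y).hasDerivWithinAt)
    (fun y hy => hle y hy.1) (Set.right_mem_Icc.2 hx)

/-- The function `s ↦ s sin s + cos s`; its value at `κ r` is the flux of `-∇ Re Φ_κ(·, 0)` through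
the sphere of radius `r` about the origin. -/
def fluxProfile (s : ℝ) : ℝ := s * sin s + cos s

lemma hasDerivAt_fluxProfile (s : ℝ) : HasDerivAt fluxProfile (s * cos s) s :=
  (((hasDerivAt_id' s).mul (hasDerivAt_sin s)).add (hasDerivAt_cos s)).congr_deriv (by ring)

lemma hasDerivAt_sq_mul_cos (s : ℝ) :
    HasDerivAt (fun x => x ^ 2 * cos x) (2 * s * cos s - s ^ 2 * sin s) s :=
  ((hasDerivAt_pow 2 s).mul (hasDerivAt_cos s)).congr_deriv (by push_cast; ring)

lemma hasDerivAt_cubic (c b a s : ℝ) :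
    HasDerivAt (fun x : ℝ => c + b * x ^ 2 - a * x ^ 3) (2 * b * s - 3 * a * s ^ 2) s :=
  ((((hasDerivAt_pow 2 s).const_mul b).const_add c).sub
    ((hasDerivAt_pow 3 s).const_mul a)).congr_deriv (by push_cast; ring)

lemma le_fluxProfile {s : ℝ} (hs : 0 ≤ s) :
    1 + 1 / 2 * s ^ 2 - 1 / 3 * s ^ 3 ≤ fluxProfile s :=
  le_of_hasDerivAt_le (hasDerivAt_cubic 1 (1 / 2) (1 / 3)) hasDerivAt_fluxProfile
    (by simp [fluxProfile]) (fun x hx => by nlinarith [one_sub_le_cos hx]) hs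

lemma le_sq_mul_cos_sub_fluxProfile {s : ℝ} (hs : 0 ≤ s) :
    -1 + 1 / 2 * s ^ 2 - 2 / 3 * s ^ 3 ≤ s ^ 2 * cos s - fluxProfile s :=
  le_of_hasDerivAt_le (hasDerivAt_cubic (-1) (1 / 2) (2 / 3))
    (fun x => (hasDerivAt_sq_mul_cos x).sub (hasDerivAt_fluxProfile x)) (by simp [fluxProfile])
    (fun x hx => by nlinarith [one_sub_le_cos hx, sin_le_one x, sq_nonneg x]) hs

lemma le_sq_mul_cos_sub_two_mul_fluxProfile {s : ℝ} (hs : 0 ≤ s) :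
    -2 - 1 / 3 * s ^ 3 ≤ s ^ 2 * cos s - 2 * fluxProfile s := by
  have hcubic : -2 + 0 * s ^ 2 - 1 / 3 * s ^ 3 ≤ s ^ 2 * cos s - 2 * fluxProfile s :=
    le_of_hasDerivAt_le (hasDerivAt_cubic (-2) 0 (1 / 3))
      (fun x => (hasDerivAt_sq_mul_cos x).sub ((hasDerivAt_fluxProfile x).const_mul 2))
      (by simp [fluxProfile]) (fun x _ => by nlinarith [sin_le_one x, sq_nonneg x]) hs
  simpa using hcubic

end TrigonometricBounds

section RadialFunctions

variable {E F : Type*} [NormedAddCommGroup E] [InnerProductSpace ℝ E]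
  [NormedAddCommGroup F] [NormedSpace ℝ F]

lemma hasFDerivAt_norm_of_ne_zero {x : E} (hx : x ≠ 0) :
    HasFDerivAt (fun y : E => ‖y‖) (‖x‖⁻¹ • innerSL ℝ x) x := by
  have hsqrt := (hasStrictFDerivAt_norm_sq x).hasFDerivAt.sqrt (by simpa using hx)
  simp only [sqrt_sq (norm_nonneg _)] at hsqrt
  refine hsqrt.congr_fderiv ?_
  ext w
  simp only [smul_apply, innerSL_apply_apply, nsmul_eq_mul, smul_eq_mul]
  field_simp
  norm_num

lemma hasFDerivAt_comp_norm {g : ℝ → F} {g' : F} {x : E} (hx : x ≠ 0)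
    (hg : HasDerivAt g g' ‖x‖) :
    HasFDerivAt (fun y : E => g ‖y‖) ((‖x‖⁻¹ • innerSL ℝ x).smulRight g') x :=
  (hg.hasFDerivAt.comp x (hasFDerivAt_norm_of_ne_zero hx)).congr_fderiv
    (by ext w; simp [mul_smul])

lemma fderiv_fderiv_comp_norm {g g₁ : ℝ → F} {g₂ : F} {x : E} (hx : x ≠ 0)
    (hg : ∀ r, 0 < r → HasDerivAt g (g₁ r) r) (hg₁ : HasDerivAt g₁ g₂ ‖x‖) (e w : E) :
    fderiv ℝ (fun x' : E => fderiv ℝ (fun x'' : E => g ‖x''‖) x' e) x w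
      = inner ℝ w e • (‖x‖⁻¹ • g₁ ‖x‖)
        + (inner ℝ x e * inner ℝ x w / ‖x‖ ^ 2) • (g₂ - ‖x‖⁻¹ • g₁ ‖x‖) := by
  have hgrad : (fun x' : E => fderiv ℝ (fun x'' : E => g ‖x''‖) x' e) =ᶠ[nhds x]
      fun x' => inner ℝ x' e • (fun r : ℝ => r⁻¹ • g₁ r) ‖x'‖ := by
    filter_upwards [isOpen_ne.mem_nhds hx] with x' hx'
    rw [(hasFDerivAt_comp_norm hx' (hg _ (norm_pos_iff.2 hx'))).fderiv]
    simp [smul_smul, mul_comm]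
  have hinner : HasFDerivAt (fun x' : E => inner ℝ x' e) ((innerSL ℝ).flip e) x :=
    ((innerSL ℝ).flip e).hasFDerivAt
  have hquot : HasDerivAt (fun r : ℝ => r⁻¹ • g₁ r)
      (‖x‖⁻¹ • (g₂ - ‖x‖⁻¹ • g₁ ‖x‖)) ‖x‖ :=
    ((hasDerivAt_inv (norm_ne_zero_iff.2 hx)).smul hg₁).congr_deriv (by module)
  have hderiv : HasFDerivAt (fun x' : E => inner ℝ x' e • (fun r : ℝ => r⁻¹ • g₁ r) ‖x'‖) _ x :=
    hinner.smul (hasFDerivAt_comp_norm hx hquot)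
  rw [hgrad.fderiv_eq, hderiv.fderiv]
  simp only [add_apply, smul_apply,
    ContinuousLinearMap.smulRight_apply, ContinuousLinearMap.flip_apply, innerSL_apply_apply]
  module

end RadialFunctions

section QuadraticForms

variable {ι : Type*} [Fintype ι] [DecidableEq ι]

lemma sum_sum_mul_radial_mul (T L : ℝ) (x v : EuclideanSpace ℝ ι) :
    ∑ i, ∑ j, v i * (T * (if i = j then 1 else 0) + (L - T) * (x i * x j / ‖x‖ ^ 2)) * v j
      = T * ‖v‖ ^ 2 + (L - T) * (inner ℝ x v ^ 2 / ‖x‖ ^ 2) := by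
  have hinner : inner ℝ x v = ∑ i, v i * x i := by simp [PiLp.inner_apply]
  have hdiag : ‖v‖ ^ 2 = ∑ i, ∑ j, v i * (if i = j then 1 else 0) * v j := by
    rw [EuclideanSpace.real_norm_sq_eq]
    simp [pow_two]
  rw [hdiag, hinner, pow_two (∑ i, v i * x i), Finset.sum_mul_sum]
  simp only [Finset.sum_div, Finset.mul_sum, ← Finset.sum_add_distrib]
  refine Finset.sum_congr rfl fun i _ => Finset.sum_congr rfl fun j _ => ?_
  ring

lemma mul_norm_sq_le_sum_sum_mul_radial_mul {m T L : ℝ} (hT : m ≤ T) (hL : m ≤ L)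
    (x v : EuclideanSpace ℝ ι) :
    m * ‖v‖ ^ 2 ≤
      ∑ i, ∑ j, v i * (T * (if i = j then 1 else 0) + (L - T) * (x i * x j / ‖x‖ ^ 2)) * v j := by
  have hproj : inner ℝ x v ^ 2 / ‖x‖ ^ 2 ≤ ‖v‖ ^ 2 := by
    refine div_le_of_le_mul₀ (sq_nonneg _) (sq_nonneg _) ?_
    rw [← mul_pow, mul_comm, ← sq_abs]
    gcongr
    exact abs_real_inner_le_norm x v
  set q := inner ℝ x v ^ 2 / ‖x‖ ^ 2
  have hq : 0 ≤ q := by positivity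
  calc m * ‖v‖ ^ 2 = m * (‖v‖ ^ 2 - q) + m * q := by ring
    _ ≤ T * (‖v‖ ^ 2 - q) + L * q :=
      add_le_add (mul_le_mul_of_nonneg_right hT (sub_nonneg.2 hproj))
        (mul_le_mul_of_nonneg_right hL hq)
    _ = T * ‖v‖ ^ 2 + (L - T) * q := by ring
    _ = _ := (sum_sum_mul_radial_mul T L x v).symm

end QuadraticForms

section HelmholtzProfile

/-- The radial profile of the fundamental solution: `Phi κ x y = helmholtzProfile κ ‖x - y‖`. -/
def helmholtzProfile (κ r : ℝ) : ℂ :=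
  Complex.exp (Complex.I * κ * r) / (4 * π * r)

/-- The derivative of `helmholtzProfile κ` away from `0`, written as a multiple of
`helmholtzProfile κ r` so that differentiating it again reuses the first derivative. -/
def helmholtzProfileDeriv (κ r : ℝ) : ℂ :=
  (Complex.I * κ - (r : ℂ)⁻¹) * helmholtzProfile κ r

lemma hasDerivAt_helmholtzProfile (κ : ℝ) {r : ℝ} (hr : r ≠ 0) :
    HasDerivAt (helmholtzProfile κ) (helmholtzProfileDeriv κ r) r := by
  have hr' : (r : ℂ) ≠ 0 := Complex.ofReal_ne_zero.2 hr
  have hπ : (π : ℂ) ≠ 0 := Complex.ofReal_ne_zero.2 pi_ne_zero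
  have hexp := ((hasDerivAt_id' (r : ℂ)).const_mul (Complex.I * κ)).cexp
  have hden := (hasDerivAt_id' (r : ℂ)).const_mul (4 * (π : ℂ))
  refine ((hexp.div hden (by simp [hπ, hr'])).comp_ofReal).congr_deriv ?_
  simp only [helmholtzProfileDeriv, helmholtzProfile]
  field_simp

/-- The Helmholtz equation `Δg + κ²g = 0` for radial functions in dimension three. -/
lemma hasDerivAt_helmholtzProfileDeriv (κ : ℝ) {r : ℝ} (hr : r ≠ 0) :
    HasDerivAt (helmholtzProfileDeriv κ)
      (-κ ^ 2 * helmholtzProfile κ r - 2 / r * helmholtzProfileDeriv κ r) r := by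
  have hr' : (r : ℂ) ≠ 0 := Complex.ofReal_ne_zero.2 hr
  have hfactor := ((hasDerivAt_inv hr').const_sub (Complex.I * κ)).comp_ofReal
  refine (hfactor.mul (hasDerivAt_helmholtzProfile κ hr)).congr_deriv ?_
  simp only [helmholtzProfileDeriv]
  field_simp
  ring_nf
  simp only [Complex.I_sq]
  ring

lemma helmholtzProfile_eq_mk (κ r : ℝ) :
    helmholtzProfile κ r = ⟨cos (κ * r) / (4 * π * r), sin (κ * r) / (4 * π * r)⟩ := by
  have hexp : Complex.exp (Complex.I * κ * r) = cos (κ * r) + sin (κ * r) * Complex.I := by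
    rw [Complex.ofReal_cos, Complex.ofReal_sin, ← Complex.exp_mul_I]
    push_cast
    ring_nf
  rw [Complex.mk_eq_add_mul_I, helmholtzProfile, hexp]
  push_cast
  ring

lemma helmholtzProfile_re (κ r : ℝ) : (helmholtzProfile κ r).re = cos (κ * r) / (4 * π * r) := by
  rw [helmholtzProfile_eq_mk]

lemma helmholtzProfileDeriv_re (κ : ℝ) {r : ℝ} (hr : r ≠ 0) :
    (helmholtzProfileDeriv κ r).re = -fluxProfile (κ * r) / (4 * π * r ^ 2) := by
  rw [helmholtzProfileDeriv, helmholtzProfile_eq_mk, ← Complex.ofReal_inv]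
  simp only [Complex.mul_re, Complex.sub_re, Complex.sub_im, Complex.mul_im, Complex.I_re,
    Complex.I_im, Complex.ofReal_re, Complex.ofReal_im, fluxProfile]
  field_simp
  ring

end HelmholtzProfile

section KupradzeMatrix

/-- The eigenvalue of `Re Γ^ω(x, y)` on the plane orthogonal to `x - y`, where `r = |x - y|`. -/
def transversalEigenvalue (κs κp ω r : ℝ) : ℝ :=
  ((κs * r) ^ 2 * cos (κs * r) - fluxProfile (κs * r) + fluxProfile (κp * r))
    / (4 * π * ω ^ 2 * r ^ 3)

/-- The eigenvalue of `Re Γ^ω(x, y)` on the line spanned by `x - y`, where `r = |x - y|`. -/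
def longitudinalEigenvalue (κs κp ω r : ℝ) : ℝ :=
  (2 * fluxProfile (κs * r) + ((κp * r) ^ 2 * cos (κp * r) - 2 * fluxProfile (κp * r)))
    / (4 * π * ω ^ 2 * r ^ 3)

/-- The common lower bound of both eigenvalues of `Re Γ^ω(x, y)` when `κp ≤ κs`, where
`r = |x - y|`. -/
def eigenvalueBound (κs κp ω r : ℝ) : ℝ :=
  (κp ^ 2 - r * (2 * κs ^ 3 + κp ^ 3) / 3) / (4 * π * ω ^ 2 * r)

lemma eigenvalueBound_eq_div_pow_three (κs κp ω : ℝ) {r : ℝ} (hr : r ≠ 0) :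
    eigenvalueBound κs κp ω r
      = ((κp * r) ^ 2 - (2 * (κs * r) ^ 3 + (κp * r) ^ 3) / 3) / (4 * π * ω ^ 2 * r ^ 3) := by
  rw [eigenvalueBound]
  field_simp

lemma eigenvalueBound_le_transversalEigenvalue {κs κp r : ℝ} (ω : ℝ) (hκp : 0 ≤ κp) (hκ : κp ≤ κs)
    (hr : 0 < r) : eigenvalueBound κs κp ω r ≤ transversalEigenvalue κs κp ω r := by
  have hsq : (κp * r) ^ 2 ≤ (κs * r) ^ 2 := by gcongr
  have hκs : 0 ≤ κs := hκp.trans hκ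
  rw [eigenvalueBound_eq_div_pow_three κs κp ω hr.ne', transversalEigenvalue]
  gcongr
  linarith [le_sq_mul_cos_sub_fluxProfile (s := κs * r) (by positivity),
    le_fluxProfile (s := κp * r) (by positivity)]

lemma eigenvalueBound_le_longitudinalEigenvalue {κs κp r : ℝ} (ω : ℝ) (hκp : 0 ≤ κp)
    (hκ : κp ≤ κs) (hr : 0 < r) :
    eigenvalueBound κs κp ω r ≤ longitudinalEigenvalue κs κp ω r := by
  have hsq : (κp * r) ^ 2 ≤ (κs * r) ^ 2 := by gcongr
  have hκs : 0 ≤ κs := hκp.trans hκ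
  rw [eigenvalueBound_eq_div_pow_three κs κp ω hr.ne', longitudinalEigenvalue]
  gcongr
  linarith [le_fluxProfile (s := κs * r) (by positivity),
    le_sq_mul_cos_sub_two_mul_fluxProfile (s := κp * r) (by positivity)]

lemma fderiv_fderiv_Phi_sub_s12 (κ₁ κ₂ : ℝ) {x y : E3} (hxy : x ≠ y) (e w : E3) :
    fderiv ℝ (fun x' : E3 => fderiv ℝ (fun x'' : E3 => Phi κ₁ x'' y - Phi κ₂ x'' y) x' e) x w
      = inner ℝ w e • (‖x - y‖⁻¹ •
          (helmholtzProfileDeriv κ₁ ‖x - y‖ - helmholtzProfileDeriv κ₂ ‖x - y‖))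
        + (inner ℝ (x - y) e * inner ℝ (x - y) w / ‖x - y‖ ^ 2) •
          (κ₂ ^ 2 • helmholtzProfile κ₂ ‖x - y‖ - κ₁ ^ 2 • helmholtzProfile κ₁ ‖x - y‖
            - (3 * ‖x - y‖⁻¹) •
              (helmholtzProfileDeriv κ₁ ‖x - y‖ - helmholtzProfileDeriv κ₂ ‖x - y‖)) := by
  have hr : ‖x - y‖ ≠ 0 := norm_ne_zero_iff.2 (sub_ne_zero.2 hxy)
  have hradial := fderiv_fderiv_comp_norm (sub_ne_zero.2 hxy)
    (fun r hr => (hasDerivAt_helmholtzProfile κ₁ hr.ne').sub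
      (hasDerivAt_helmholtzProfile κ₂ hr.ne'))
    ((hasDerivAt_helmholtzProfileDeriv κ₁ hr).sub (hasDerivAt_helmholtzProfileDeriv κ₂ hr)) e w
  rw [← fderiv_comp_sub] at hradial
  simp_rw [← fderiv_comp_sub] at hradial
  refine hradial.trans ?_
  simp only [Complex.real_smul]
  push_cast
  ring

lemma one_div_eq_kappaS_sq_div_sq {mu om : ℝ} (hmu : 0 ≤ mu) (hom : om ≠ 0) :
    1 / mu = kappaS mu om ^ 2 / om ^ 2 := by
  rw [kappaS, cS, div_pow, sq_sqrt hmu]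
  field_simp

lemma Gamma_re (lam : ℝ) {mu om : ℝ} (hmu : 0 ≤ mu) (hom : om ≠ 0) {x y : E3} (hxy : x ≠ y)
    (i j : Fin 3) :
    (Gamma lam mu om x y i j).re =
      transversalEigenvalue (kappaS mu om) (kappaP lam mu om) om ‖x - y‖ * (if i = j then 1 else 0)
      + (longitudinalEigenvalue (kappaS mu om) (kappaP lam mu om) om ‖x - y‖
          - transversalEigenvalue (kappaS mu om) (kappaP lam mu om) om ‖x - y‖)
        * ((x - y) i * (x - y) j / ‖x - y‖ ^ 2) := by
  have hr : ‖x - y‖ ≠ 0 := norm_ne_zero_iff.2 (sub_ne_zero.2 hxy)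
  have hPhi (κ : ℝ) : Phi κ x y = helmholtzProfile κ ‖x - y‖ := rfl
  have hmu' : 1 / (mu : ℂ) = ((kappaS mu om ^ 2 / om ^ 2 : ℝ) : ℂ) := by
    exact_mod_cast one_div_eq_kappaS_sq_div_sq hmu hom
  have hom' : 1 / (om : ℂ) ^ 2 = ((1 / om ^ 2 : ℝ) : ℂ) := by push_cast; rfl
  have hδ : (if i = j then (1 : ℂ) else 0) = ((if i = j then 1 else 0 : ℝ) : ℂ) := by
    split_ifs <;> simp
  have hbasis : inner ℝ (EuclideanSpace.single i (1 : ℝ)) (EuclideanSpace.single j (1 : ℝ))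
      = if i = j then (1 : ℝ) else 0 := by simp [EuclideanSpace.inner_single_left]
  have hcoord (k : Fin 3) : inner ℝ (x - y) (EuclideanSpace.single k (1 : ℝ)) = (x - y) k := by
    simp [EuclideanSpace.inner_single_right]
  rw [_root_.Gamma, fderiv_fderiv_Phi_sub_s12 _ _ hxy, hbasis, hcoord, hcoord, hPhi, hmu', hom', hδ]
  simp only [Complex.add_re, Complex.sub_re, Complex.re_mul_ofReal, Complex.re_ofReal_mul,
    Complex.smul_re, smul_eq_mul, helmholtzProfile_re, helmholtzProfileDeriv_re _ hr,
    transversalEigenvalue, longitudinalEigenvalue]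
  field_simp
  ring

end KupradzeMatrix

section LowerBound

lemma one_le_sum_pow_add_two_zpow {q : ℝ} (hq : 0 ≤ q) (n : ℕ) :
    1 ≤ (∑ l ∈ Finset.range n, q ^ l) + (2 : ℝ) ^ ((1 : ℤ) - (n : ℤ)) := by
  rcases n with _ | n
  · norm_num
  · have hterm : q ^ 0 ≤ ∑ l ∈ Finset.range (n + 1), q ^ l :=
      Finset.single_le_sum (f := (q ^ ·)) (fun l _ => pow_nonneg hq l) (by simp)
    rw [pow_zero] at hterm
    exact le_add_of_le_of_nonneg hterm (by positivity)

lemma tConst_le (lam mu : ℝ) {om D r : ℝ} (hom : 0 ≤ om) (hD : 0 ≤ D) (hr : r ≤ D) :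
    tConst lam mu om D
      ≤ 1 / cP lam mu ^ 2 - r * (2 * (om / cS mu ^ 3) + om / cP lam mu ^ 3) / 3 := by
  have hcS : 0 ≤ cS mu := sqrt_nonneg _
  have hcP : 0 ≤ cP lam mu := sqrt_nonneg _
  have hκs : 0 ≤ kappaS mu om := div_nonneg hom hcS
  have hκp : 0 ≤ kappaP lam mu om := div_nonneg hom hcP
  have hS := one_le_sum_pow_add_two_zpow (q := kappaS mu om * D / 2) (by positivity)
    (NOm lam mu om D)
  have hP := one_le_sum_pow_add_two_zpow (q := kappaP lam mu om * D / 2) (by positivity)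
    (NOm lam mu om D)
  have hsterm := le_mul_of_one_le_right (a := 2 * D * (om / cS mu ^ 3)) (by positivity) hS
  have hpterm := le_mul_of_one_le_right (a := D * (om / cP lam mu ^ 3)) (by positivity) hP
  have hrD : r * (2 * (om / cS mu ^ 3) + om / cP lam mu ^ 3)
      ≤ D * (2 * (om / cS mu ^ 3) + om / cP lam mu ^ 3) := by gcongr
  have hDnonneg : 0 ≤ D * (2 * (om / cS mu ^ 3) + om / cP lam mu ^ 3) := by positivity
  rw [tConst]
  linarith

lemma eigenvalueBound_kappa (lam mu : ℝ) {om : ℝ} (hom : om ≠ 0) (r : ℝ) :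
    eigenvalueBound (kappaS mu om) (kappaP lam mu om) om r
      = (1 / cP lam mu ^ 2 - r * (2 * (om / cS mu ^ 3) + om / cP lam mu ^ 3) / 3)
        / (4 * π * r) := by
  rw [eigenvalueBound, kappaS, kappaP]
  field_simp

theorem gamma_real_part_lower_bound_general (lam mu om : ℝ) (hmu : 0 < mu) (hlm : 0 ≤ lam + mu)
    (hom : 0 < om) (z z' : E3) (hzz : z ≠ z') (v : E3) :
    (1 / cP lam mu ^ 2 - dist z z' * (2 * (om / cS mu ^ 3) + om / cP lam mu ^ 3) / 3)
        / (4 * π * dist z z') * ‖v‖ ^ 2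
      ≤ ∑ i : Fin 3, ∑ j : Fin 3, v i * (Gamma lam mu om z z' i j).re * v j := by
  have hr : 0 < ‖z - z'‖ := norm_pos_iff.2 (sub_ne_zero.2 hzz)
  have hcS : 0 < cS mu := sqrt_pos.2 hmu
  have hcSP : cS mu ≤ cP lam mu := sqrt_le_sqrt (by linarith)
  have hκp : 0 ≤ kappaP lam mu om := div_nonneg hom.le (sqrt_nonneg _)
  have hκ : kappaP lam mu om ≤ kappaS mu om := div_le_div_of_nonneg_left hom.le hcS hcSP
  simp only [Gamma_re lam hmu.le hom.ne' hzz]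
  rw [dist_eq_norm, ← eigenvalueBound_kappa lam mu hom.ne']
  exact mul_norm_sq_le_sum_sum_mul_radial_mul
    (eigenvalueBound_le_transversalEigenvalue om hκp hκ hr)
    (eigenvalueBound_le_longitudinalEigenvalue om hκp hκ hr) (z - z') v

end LowerBound

/-- The key kernel lower bound in the proof of Lemma 3.2: for
`0 < |z − z′| ≤ D` and any `v ∈ ℝ³`,
`vᵀ Re(Γ^ω(z,z′)) v ≥ (t/(4π|z−z′|)) |v|²`. -/
theorem gamma_real_part_lower_bound (lam mu om D : ℝ) (hmu : 0 < mu)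
    (hlm : 0 < 3 * lam + 2 * mu) (hom : 0 < om) (hD : 0 < D)
    (z z' : E3) (hzz : z ≠ z') (hle : dist z z' ≤ D) (v : E3) :
    (tConst lam mu om D / (4 * Real.pi * dist z z')) * ‖v‖ ^ 2
      ≤ ∑ i : Fin 3, ∑ j : Fin 3, v i * (Gamma lam mu om z z' i j).re * v j := by
  have ht := tConst_le lam mu hom.le hD.le hle
  have hlm_nonneg : 0 ≤ lam + mu := by linarith
  exact le_trans (by gcongr) (gamma_real_part_lower_bound_general lam mu om hmu hlm_nonneg
    hom z z' hzz v)

end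
end
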